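/- arXiv:2503.03902 — 2 statements merged into one kernel-verified Lean document; each statement's English description precedes it below -/
import Mathlib

section
/- Let H be a real Hilbert space, A : H → Set H monotone, D : H → H monotone, B : H → H monotone, and fix ε > 0. Let β₁, β₂ > 0 and suppose z₁, z₂ ∈ H satisfy 0 ∈ A z_i + D z_i + ε z_i + β_i B z_i for i = 1, 2. Then ‖z₁ − z₂‖ ≤ (|β₁ − β₂| / ε) · max(‖B z₁‖, ‖B z₂‖). -/
open scoped RealInnerProductSpace

/-!
Adding `ε • id` to a monotone operator makes it `ε`-strongly monotone, hence expanding by the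
factor `ε`. Apply this to `M = A + β₁ • B`, with `D` absorbed into `A`: `M + ε • id` attains `0` at
`z₁` and the defect `(β₁ - β₂) • b₂`, with `b₂ ∈ B z₂`, at `z₂`, so `ε * ‖z₁ - z₂‖` is at most the
norm of that defect.
-/

section MonotoneOperator

open scoped Pointwise

variable {H : Type*} [SeminormedAddCommGroup H] [InnerProductSpace ℝ H]

/-- Monotonicity of a set-valued operator on a real inner product space. The values may be empty,
and a single-valued map `T` is encoded as `fun x ↦ {T x}`. -/
def IsMonotoneOperator (M : H → Set H) : Prop :=
  ∀ ⦃x y u v : H⦄, u ∈ M x → v ∈ M y → 0 ≤ ⟪u - v, x - y⟫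

theorem isMonotoneOperator_singleton {T : H → H} :
    IsMonotoneOperator (fun x ↦ {T x}) ↔ ∀ x y, 0 ≤ ⟪T x - T y, x - y⟫ := by
  simp [IsMonotoneOperator]

namespace IsMonotoneOperator

variable {M N : H → Set H}

theorem add (hM : IsMonotoneOperator M) (hN : IsMonotoneOperator N) :
    IsMonotoneOperator (M + N) := by
  rintro x y _ _ ⟨u, hu, u', hu', rfl⟩ ⟨v, hv, v', hv', rfl⟩
  rw [add_sub_add_comm, inner_add_left]
  exact add_nonneg (hM hu hv) (hN hu' hv')

theorem smul_of_nonneg (hM : IsMonotoneOperator M) {c : ℝ} (hc : 0 ≤ c) :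
    IsMonotoneOperator (c • M) := by
  rintro x y _ _ ⟨u, hu, rfl⟩ ⟨v, hv, rfl⟩
  rw [← smul_sub, real_inner_smul_left]
  exact mul_nonneg hc (hM hu hv)

theorem mul_norm_sub_le_norm_add_smul_sub (hM : IsMonotoneOperator M) {x y u v : H}
    (hu : u ∈ M x) (hv : v ∈ M y) (ε : ℝ) :
    ε * ‖x - y‖ ≤ ‖(u + ε • x) - (v + ε • y)‖ := by
  have strong_monotonicity :
      ε * ‖x - y‖ * ‖x - y‖ ≤ ‖(u + ε • x) - (v + ε • y)‖ * ‖x - y‖ := calc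
    ε * ‖x - y‖ * ‖x - y‖ = ε * ⟪x - y, x - y⟫ := by
      rw [real_inner_self_eq_norm_mul_norm, mul_assoc]
    _ ≤ ⟪u - v, x - y⟫ + ε * ⟪x - y, x - y⟫ := le_add_of_nonneg_left (hM hu hv)
    _ = ⟪(u + ε • x) - (v + ε • y), x - y⟫ := by
      rw [add_sub_add_comm, ← smul_sub, inner_add_left, real_inner_smul_left]
    _ ≤ ‖(u + ε • x) - (v + ε • y)‖ * ‖x - y‖ := real_inner_le_norm _ _
  rcases (norm_nonneg (x - y)).eq_or_lt with hxy | hxy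
  · rw [← hxy, mul_zero]
    exact norm_nonneg _
  · exact le_of_mul_le_mul_right strong_monotonicity hxy

end IsMonotoneOperator

theorem solution_map_lipschitz_in_beta_general {A B : H → Set H}
    (hA : IsMonotoneOperator A) (hB : IsMonotoneOperator B)
    {ε β₁ β₂ : ℝ} (hε : 0 < ε) (hβ₁ : 0 ≤ β₁) {z₁ z₂ a₁ a₂ b₁ b₂ : H}
    (ha₁ : a₁ ∈ A z₁) (hb₁ : b₁ ∈ B z₁) (hz₁ : a₁ + ε • z₁ + β₁ • b₁ = 0)
    (ha₂ : a₂ ∈ A z₂) (hb₂ : b₂ ∈ B z₂) (hz₂ : a₂ + ε • z₂ + β₂ • b₂ = 0) :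
    ‖z₁ - z₂‖ ≤ |β₁ - β₂| / ε * ‖b₂‖ := by
  have hM : IsMonotoneOperator (A + β₁ • B) := hA.add (hB.smul_of_nonneg hβ₁)
  have hu : a₁ + β₁ • b₁ ∈ (A + β₁ • B) z₁ := Set.add_mem_add ha₁ (Set.smul_mem_smul_set hb₁)
  have hv : a₂ + β₁ • b₂ ∈ (A + β₁ • B) z₂ := Set.add_mem_add ha₂ (Set.smul_mem_smul_set hb₂)
  have value₁ : a₁ + β₁ • b₁ + ε • z₁ = 0 := by rw [add_right_comm, hz₁]
  have value₂ : a₂ + β₁ • b₂ + ε • z₂ = (β₁ - β₂) • b₂ := calc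
    a₂ + β₁ • b₂ + ε • z₂ = (a₂ + ε • z₂ + β₂ • b₂) + (β₁ - β₂) • b₂ := by module
    _ = (β₁ - β₂) • b₂ := by rw [hz₂, zero_add]
  have hle : ε * ‖z₁ - z₂‖ ≤ |β₁ - β₂| * ‖b₂‖ := by
    simpa only [value₁, value₂, zero_sub, norm_neg, norm_smul, Real.norm_eq_abs] using
      hM.mul_norm_sub_le_norm_add_smul_sub hu hv ε
  rwa [div_mul_eq_mul_div, le_div_iff₀' hε]

end MonotoneOperator

/-- Lipschitz dependence of the regularized solutions on the penalty
parameter `β`, for fixed Tikhonov parameter `ε`. -/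
theorem solution_map_lipschitz_in_beta
    {H : Type*} [NormedAddCommGroup H] [InnerProductSpace ℝ H]
    (A : H → Set H) (D B : H → H)
    (hAmono : ∀ ⦃x y u v : H⦄, u ∈ A x → v ∈ A y → (0:ℝ) ≤ ⟪u - v, x - y⟫)
    (hDmono : ∀ x y : H, (0:ℝ) ≤ ⟪D x - D y, x - y⟫)
    (hBmono : ∀ x y : H, (0:ℝ) ≤ ⟪B x - B y, x - y⟫)
    (ε : ℝ) (hε : 0 < ε) (β₁ β₂ : ℝ) (hβ₁ : 0 < β₁) (hβ₂ : 0 < β₂)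
    (z₁ z₂ a₁ a₂ : H)
    (ha₁ : a₁ ∈ A z₁) (hz₁ : a₁ + D z₁ + ε • z₁ + β₁ • B z₁ = 0)
    (ha₂ : a₂ ∈ A z₂) (hz₂ : a₂ + D z₂ + ε • z₂ + β₂ • B z₂ = 0) :
    ‖z₁ - z₂‖ ≤ (|β₁ - β₂| / ε) * max ‖B z₁‖ ‖B z₂‖ := by
  have hAD := IsMonotoneOperator.add hAmono (isMonotoneOperator_singleton.2 hDmono)
  exact (solution_map_lipschitz_in_beta_general hAD (isMonotoneOperator_singleton.2 hBmono) hε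
    hβ₁.le (Set.add_mem_add ha₁ rfl) rfl hz₁ (Set.add_mem_add ha₂ rfl) rfl hz₂).trans
    (by gcongr; exact le_max_right _ _)
end

section
/- Let H be a real Hilbert space, D : H → H η-cocoercive (η > 0) and B : H → H μ-cocoercive (μ > 0). Fix ε > 0, β > 0 and λ > 0 satisfying λ ≤ η(1 − λε) (equivalently λ ≤ η/(1 + ηε)) and λβ ≤ μ(1 − λε), and set V(x) := D x + ε x + β B x. Then for all x, y ∈ H, ‖(x − λ V(x)) − (y − λ V(y))‖ ≤ (1 − λε) ‖x − y‖. -/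
open scoped RealInnerProductSpace

/-!
With `u = x - y` and `c = 1 - λε`, the difference of the two images is `c • u - λ • ΔD - λβ • ΔB`.
Part of the multiple `c` of `u` is spent on absorbing each cocoercive term: for a `μ`-cocoercive
`M`, expanding the square shows that `a • u - t • ΔM` is no longer than `a • u` once `t ≤ 2μa`.
Absorbing both terms therefore takes `λ / (2η) + λβ / (2μ) ≤ c`.
-/

section Cocoercive

variable {H : Type*} [SeminormedAddCommGroup H] [InnerProductSpace ℝ H]

/-- `μ`-cocoercivity of a map `M`; for `μ > 0` it makes `x ↦ x - t • M x` nonexpansive for small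
steps `t`. The modulus `μ` may be any real number; a `0`-cocoercive map is a monotone one. -/
def IsCocoercive (μ : ℝ) (M : H → H) : Prop :=
  ∀ x y : H, μ * ‖M x - M y‖ ^ 2 ≤ ⟪M x - M y, x - y⟫

theorem IsCocoercive.norm_smul_sub_smul_le {M : H → H} {μ a t : ℝ} (hM : IsCocoercive μ M)
    (ha : 0 ≤ a) (ht : 0 ≤ t) (hta : t ≤ 2 * μ * a) (x y : H) :
    ‖a • (x - y) - t • (M x - M y)‖ ≤ a * ‖x - y‖ := by
  set u := x - y
  set d := M x - M y
  have hstep : t * ‖d‖ ^ 2 ≤ 2 * a * ⟪d, u⟫ :=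
    calc
      t * ‖d‖ ^ 2 ≤ 2 * μ * a * ‖d‖ ^ 2 := by gcongr
      _ = 2 * a * (μ * ‖d‖ ^ 2) := by ring
      _ ≤ 2 * a * ⟪d, u⟫ := by gcongr; exact hM x y
  have hexpand : ‖a • u - t • d‖ ^ 2 = (a * ‖u‖) ^ 2 - t * (2 * a * ⟪d, u⟫ - t * ‖d‖ ^ 2) := by
    rw [norm_sub_sq_real, norm_smul_of_nonneg ha, norm_smul_of_nonneg ht, real_inner_smul_left,
      real_inner_smul_right, real_inner_comm]
    ring
  refine le_of_sq_le_sq ?_ (by positivity)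
  rw [hexpand]
  exact sub_le_self _ (mul_nonneg ht (sub_nonneg.2 hstep))

theorem forward_step_contraction_general {D B : H → H} {η μ ε β lam : ℝ}
    (hη : 0 < η) (hμ : 0 < μ) (hD : IsCocoercive η D) (hB : IsCocoercive μ B)
    (hβ : 0 ≤ β) (hlam : 0 ≤ lam) (hstep : lam / η + lam * β / μ ≤ 2 * (1 - lam * ε)) (x y : H) :
    ‖(x - lam • (D x + ε • x + β • B x)) - (y - lam • (D y + ε • y + β • B y))‖ ≤
      (1 - lam * ε) * ‖x - y‖ := by
  set b := lam * β / (2 * μ)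
  set a := 1 - lam * ε - b
  have hb_nonneg : 0 ≤ b := by positivity
  have hη_le : lam / (2 * η) ≤ a := by
    have hη_half : lam / (2 * η) = lam / η / 2 := by ring
    have hμ_half : b = lam * β / μ / 2 := by ring
    linarith
  have ha_nonneg : 0 ≤ a := le_trans (by positivity) hη_le
  have hlam_le : lam ≤ 2 * η * a := (div_le_iff₀' (by positivity)).1 hη_le
  have hlamβ_le : lam * β ≤ 2 * μ * b := (div_le_iff₀' (by positivity)).1 le_rfl
  calc
    _ = ‖(a • (x - y) - lam • (D x - D y)) + (b • (x - y) - (lam * β) • (B x - B y))‖ := by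
      congr 1
      module
    _ ≤ a * ‖x - y‖ + b * ‖x - y‖ :=
      norm_add_le_of_le (hD.norm_smul_sub_smul_le ha_nonneg hlam hlam_le x y)
        (hB.norm_smul_sub_smul_le hb_nonneg (by positivity) hlamβ_le x y)
    _ = (1 - lam * ε) * ‖x - y‖ := by ring

end Cocoercive

/-- the forward map `x ↦ x − λV(x)`, `V = D + ε·Id + β·B`, is a
`(1 − λε)`-contraction under the step-size restrictions `λ ≤ η(1 − λε)` and
`λβ ≤ μ(1 − λε)`, for `D` `η`-cocoercive and `B` `μ`-cocoercive. -/
theorem forward_step_contraction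
    {H : Type*} [NormedAddCommGroup H] [InnerProductSpace ℝ H]
    (D B : H → H) (η μ : ℝ) (hη : 0 < η) (hμ : 0 < μ)
    (hDcoco : ∀ x y : H, η * ‖D x - D y‖^2 ≤ ⟪D x - D y, x - y⟫)
    (hBcoco : ∀ x y : H, μ * ‖B x - B y‖^2 ≤ ⟪B x - B y, x - y⟫)
    (ε β lam : ℝ) (hε : 0 < ε) (hβ : 0 < β) (hlam : 0 < lam)
    (hlam1 : lam ≤ η * (1 - lam * ε)) (hlam2 : lam * β ≤ μ * (1 - lam * ε)) :
    ∀ x y : H,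
      ‖(x - lam • (D x + ε • x + β • B x)) - (y - lam • (D y + ε • y + β • B y))‖ ≤
        (1 - lam * ε) * ‖x - y‖ := by
  have hD_step : lam / η ≤ 1 - lam * ε := (div_le_iff₀' hη).2 hlam1
  have hB_step : lam * β / μ ≤ 1 - lam * ε := (div_le_iff₀' hμ).2 hlam2
  exact forward_step_contraction_general hη hμ hDcoco hBcoco hβ.le hlam.le (by linarith)
end
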